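/- arXiv:1901.04860 — 3 statements merged into one kernel-verified Lean document; each statement's English description precedes it below -/
import Mathlib

section
/- Let k ≥ 2 and n = 2^k, and let C ⊆ {-1,1}^n be a set such that no two elements of C have Hamming distance exactly n/2. Then |C| ≤ 4 · Σ_{i=0}^{2^{k-2} - 1} C(2^k - 1, i). -/
open Finset

section Monomials

variable {ι : Type*}

/-- The squarefree monomial `∏ i ∈ S, y i` as a rational function on the cube `{0,1}^ι`. -/
def cubeMonomial (S : Finset ι) : (ι → Bool) → ℚ :=
  fun y => ∏ i ∈ S, if y i then 1 else 0

/-- The functions on the cube given by polynomials of degree at most `r` in the variables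
indexed by `T`. -/
def cubePolynomials (T : Finset ι) (r : ℕ) : Submodule ℚ ((ι → Bool) → ℚ) :=
  Submodule.span ℚ (cubeMonomial '' {S | S ⊆ T ∧ #S ≤ r})

theorem cubeMonomial_mul [DecidableEq ι] (S U : Finset ι) :
    cubeMonomial S * cubeMonomial U = cubeMonomial (S ∪ U) := by
  funext y
  have h (V : Finset ι) : cubeMonomial V y = if ∀ i ∈ V, y i = true then 1 else 0 := by
    simp [cubeMonomial, Finset.prod_ite_zero]
  simp only [Pi.mul_apply, h, mem_union, or_imp, forall_and, ite_and]
  split_ifs <;> simp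

theorem cubeMonomial_mem_cubePolynomials {T S : Finset ι} {r : ℕ} (hS : S ⊆ T) (hr : #S ≤ r) :
    cubeMonomial S ∈ cubePolynomials T r :=
  Submodule.subset_span ⟨S, ⟨hS, hr⟩, rfl⟩

theorem const_mem_cubePolynomials (T : Finset ι) (r : ℕ) (c : ℚ) :
    (fun _ => c) ∈ cubePolynomials T r := by
  have h := (cubePolynomials T r).smul_mem c
    (cubeMonomial_mem_cubePolynomials (empty_subset T) (by simp))
  convert h using 1
  funext y
  simp [cubeMonomial]

theorem mul_mem_cubePolynomials {T : Finset ι} {r s : ℕ} {f g : (ι → Bool) → ℚ}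
    (hf : f ∈ cubePolynomials T r) (hg : g ∈ cubePolynomials T s) :
    f * g ∈ cubePolynomials T (r + s) := by
  classical
  have h := Submodule.mul_mem_mul hf hg
  rw [cubePolynomials, cubePolynomials, Submodule.span_mul_span] at h
  refine Submodule.span_mono ?_ h
  rintro _ ⟨_, ⟨S, ⟨hS, hr⟩, rfl⟩, _, ⟨U, ⟨hU, hs⟩, rfl⟩, rfl⟩
  exact ⟨S ∪ U, ⟨union_subset hS hU, (card_union_le S U).trans (by omega)⟩,
    (cubeMonomial_mul S U).symm⟩

theorem prod_mem_cubePolynomials {T : Finset ι} (g : ℕ → (ι → Bool) → ℚ)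
    (hg : ∀ j, g j ∈ cubePolynomials T 1) (r : ℕ) :
    ∏ j ∈ range r, g j ∈ cubePolynomials T r := by
  induction r with
  | zero => exact const_mem_cubePolynomials T 0 1
  | succ r ih =>
    rw [prod_range_succ]
    exact mul_mem_cubePolynomials ih (hg r)

theorem card_le_of_linearIndependent_cubePolynomials {κ : Type*} [Fintype κ] {T : Finset ι}
    {r : ℕ} {v : κ → (ι → Bool) → ℚ} (hv : LinearIndependent ℚ v)
    (hmem : ∀ a, v a ∈ cubePolynomials T r) :
    Fintype.card κ ≤ ∑ i ∈ range (r + 1), (#T).choose i := by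
  classical
  set F : Finset ((ι → Bool) → ℚ) :=
    ((range (r + 1)).biUnion fun i => powersetCard i T).image cubeMonomial with hF
  have hspan : cubePolynomials T r ≤ Submodule.span ℚ (F : Set ((ι → Bool) → ℚ)) := by
    refine Submodule.span_mono ?_
    rintro _ ⟨S, ⟨hS, hr⟩, rfl⟩
    simp only [hF, coe_image]
    exact ⟨S, by simpa [mem_powersetCard, hS, Nat.lt_succ_iff] using hr, rfl⟩
  have hcard : Fintype.card κ ≤ #F := by
    have h := linearIndependent_le_span_aux' v hv (F : Set ((ι → Bool) → ℚ))
      (by rintro _ ⟨a, rfl⟩; exact hspan (hmem a))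
    simpa using h
  refine hcard.trans (card_image_le.trans (card_biUnion_le.trans ?_))
  simp

/-- The Hamming distance to a fixed vector is a polynomial of degree one in the coordinates in
`T`, on the vectors agreeing with it outside `T`. -/
theorem sum_ne_mem_cubePolynomials (T : Finset ι) (x : ι → Bool) :
    (fun y : ι → Bool => ∑ i ∈ T, if x i ≠ y i then (1 : ℚ) else 0) ∈ cubePolynomials T 1 := by
  have h : (fun y : ι → Bool => ∑ i ∈ T, if x i ≠ y i then (1 : ℚ) else 0) =
      ∑ i ∈ T, fun y : ι → Bool => if x i ≠ y i then (1 : ℚ) else 0 := by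
    funext y; simp
  rw [h]
  refine Submodule.sum_mem _ fun i hi => ?_
  have hm : cubeMonomial {i} ∈ cubePolynomials T 1 :=
    cubeMonomial_mem_cubePolynomials (by simpa using hi) (by simp)
  cases hx : x i
  · convert hm using 1
    funext y
    cases hy : y i <;> simp [cubeMonomial, hy]
  · convert (cubePolynomials T 1).sub_mem (const_mem_cubePolynomials T 1 1) hm using 1
    funext y
    cases hy : y i <;> simp [cubeMonomial, hy]

end Monomials

theorem prod_range_sub_div_eq_choose (n r : ℕ) :
    ∏ j ∈ range r, (((n : ℚ) - j) / (j + 1)) = n.choose r := by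
  induction r with
  | zero => simp
  | succ r ih =>
    rw [prod_range_succ, ih, ← mul_div_assoc, div_eq_iff (by positivity)]
    rcases le_or_gt r n with h | h
    · have := Nat.choose_succ_right_eq n r
      rw [← Nat.cast_sub h]
      exact_mod_cast this.symm
    · simp [Nat.choose_eq_zero_of_lt h, Nat.choose_eq_zero_of_lt (h.trans (Nat.lt_succ_self r))]

theorem prod_range_neg_one_sub_div (r : ℕ) :
    ∏ j ∈ range r, (((-1 : ℚ) - j) / (j + 1)) = (-1) ^ r := by
  have h (j : ℕ) : ((-1 : ℚ) - j) / (j + 1) = -1 := by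
    rw [div_eq_iff (by positivity)]; ring
  simp [h]

theorem even_choose_pred_two_pow_pred {m e : ℕ} (he : ¬ 2 ^ m ∣ e) :
    Even ((e - 1).choose (2 ^ m - 1)) := by
  by_contra hodd
  rw [Nat.not_even_iff_odd] at hodd
  have he0 : e ≠ 0 := by rintro rfl; simp at he
  have hq : 0 < 2 ^ m := by positivity
  have h := Nat.add_one_mul_choose_eq (e - 1) (2 ^ m - 1)
  rw [Nat.sub_add_cancel (Nat.one_le_iff_ne_zero.2 he0), Nat.sub_add_cancel hq] at h
  have hdvd : 2 ^ m ∣ e * (e - 1).choose (2 ^ m - 1) := h ▸ Dvd.intro_left _ rfl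
  exact he ((Nat.Coprime.pow_left m (Nat.coprime_two_left.2 hodd)).dvd_of_dvd_mul_right hdvd)

theorem det_ne_zero_of_odd_diag_of_even_offDiag {κ : Type*} [Fintype κ] [DecidableEq κ]
    (A : Matrix κ κ ℤ) (hdiag : ∀ a, Odd (A a a)) (hoff : ∀ a b, a ≠ b → Even (A a b)) :
    A.det ≠ 0 := by
  have hA : A.map (Int.castRingHom (ZMod 2)) = 1 := by
    ext a b
    rcases eq_or_ne a b with rfl | hab
    · simpa using (ZMod.intCast_eq_one_iff_odd).2 (hdiag a)
    · simpa [hab] using (ZMod.intCast_eq_zero_iff_even).2 (hoff a b hab)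
  intro h
  have hdet := RingHom.map_det (Int.castRingHom (ZMod 2)) A
  rw [RingHom.mapMatrix_apply, hA, h] at hdet
  simp at hdet

theorem hammingDist_cast_zmod_two {ι : Type*} [Fintype ι] (x y : ι → Bool) :
    (hammingDist x y : ZMod 2) = #{i | x i} + #{i | y i} := by
  simp only [hammingDist, card_filter, Nat.cast_sum, ← sum_add_distrib]
  refine sum_congr rfl fun i _ => ?_
  cases x i <;> cases y i <;> simp
  decide

theorem card_le_of_even_hammingDist {ι : Type*} [Fintype ι] [DecidableEq ι] {m : ℕ}
    (hι : Fintype.card ι = 4 * 2 ^ m) (i₀ : ι) (D : Finset (ι → Bool))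
    (hi₀ : ∀ x ∈ D, ∀ y ∈ D, x i₀ = y i₀)
    (heven : ∀ x ∈ D, ∀ y ∈ D, Even (hammingDist x y))
    (hne : ∀ x ∈ D, ∀ y ∈ D, x ≠ y → hammingDist x y ≠ 2 * 2 ^ m) :
    #D ≤ ∑ i ∈ range (2 ^ m), (Fintype.card ι - 1).choose i := by
  set T : Finset ι := univ.erase i₀ with hT
  have hTcard : #T = Fintype.card ι - 1 := by simp [hT]
  have hdist (x y : D) :
      (∑ i ∈ T, if x.1 i ≠ y.1 i then (1 : ℚ) else 0) = hammingDist x.1 y.1 := by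
    rw [hammingDist, card_filter, Nat.cast_sum, ← add_sum_erase univ _ (mem_univ i₀)]
    simp [hi₀ x x.2 y y.2, hT]
  have hlt (x y : D) : hammingDist x.1 y.1 < 4 * 2 ^ m := by
    rw [← hι, hammingDist, ← card_univ]
    refine card_lt_card ((filter_ssubset).2 ⟨i₀, mem_univ _, ?_⟩)
    simp [hi₀ x x.2 y y.2]
  set v : D → (ι → Bool) → ℚ := fun x => ∏ j ∈ range (2 ^ m - 1), fun y =>
    ((∑ i ∈ T, if x.1 i ≠ y i then (1 : ℚ) else 0) / 2 - 1 - j) / (j + 1) with hv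
  have hmem (x : D) : v x ∈ cubePolynomials T (2 ^ m - 1) := by
    refine prod_mem_cubePolynomials _ (fun j => ?_) _
    have h := (cubePolynomials T 1).sub_mem
      ((cubePolynomials T 1).smul_mem (1 / (2 * ((j : ℚ) + 1)))
        (sum_ne_mem_cubePolynomials T x.1))
      (const_mem_cubePolynomials T 1 (((1 : ℚ) + j) / (j + 1)))
    convert h using 1
    funext y
    have : (j : ℚ) + 1 ≠ 0 := by positivity
    simp only [Pi.sub_apply, Pi.smul_apply, smul_eq_mul]
    field_simp
    ring
  let A : Matrix D D ℤ := fun x y =>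
    if x = y then (-1) ^ (2 ^ m - 1) else
      ((hammingDist x.1 y.1 / 2 - 1).choose (2 ^ m - 1) : ℕ)
  have hvA (x y : D) : v x y.1 = A x y := by
    simp only [hv, Finset.prod_apply, hdist, A]
    split_ifs with hxy
    · subst hxy
      simpa using prod_range_neg_one_sub_div (2 ^ m - 1)
    · rw [Int.cast_natCast, ← prod_range_sub_div_eq_choose]
      refine prod_congr rfl fun j _ => ?_
      have hpos : 0 < hammingDist x.1 y.1 := hammingDist_pos.2 fun h => hxy (Subtype.ext h)
      obtain ⟨e, he⟩ := heven x x.2 y y.2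
      have he' : hammingDist x.1 y.1 / 2 = e := by omega
      rw [he', Nat.cast_sub (by omega), he]
      push_cast
      ring
  have hdet : A.det ≠ 0 := by
    refine det_ne_zero_of_odd_diag_of_even_offDiag A (fun x => ?_) fun x y hxy => ?_
    · simp only [A, if_true]
      exact Odd.pow (by decide)
    · simp only [A, if_neg hxy, Int.even_coe_nat]
      refine even_choose_pred_two_pow_pred ?_
      rintro ⟨c, hc⟩
      have hxy' : x.1 ≠ y.1 := fun h => hxy (Subtype.ext h)
      have hpos : 0 < hammingDist x.1 y.1 := hammingDist_pos.2 hxy'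
      have h2 := hne x x.2 y y.2 hxy'
      have h4 := hlt x y
      obtain ⟨e, he⟩ := heven x x.2 y y.2
      have he' : e = 2 ^ m * c := by omega
      have hc2 : c < 2 := by
        by_contra! h
        have := Nat.mul_le_mul_left (2 ^ m) h
        omega
      interval_cases c <;> omega
  have hrows : LinearIndependent ℚ (A.map (Int.castRingHom ℚ)).row := by
    refine Matrix.linearIndependent_rows_of_det_ne_zero (A := A.map (Int.castRingHom ℚ)) ?_
    rw [← RingHom.mapMatrix_apply, ← RingHom.map_det]
    simpa using hdet
  have hli : LinearIndependent ℚ v := by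
    refine LinearIndependent.of_comp (LinearMap.funLeft ℚ ℚ (Subtype.val : D → ι → Bool)) ?_
    convert hrows using 1
    funext x y
    simpa using hvA x y
  have h := card_le_of_linearIndependent_cubePolynomials hli hmem
  rwa [hTcard, Fintype.card_coe, Nat.sub_add_cancel Nat.one_le_two_pow] at h

theorem indep_set_card_le_of_pow_two (k : ℕ) (hk : 2 ≤ k)
    (C : Finset (Fin (2 ^ k) → Bool))
    (hC : ∀ x ∈ C, ∀ y ∈ C, x ≠ y → hammingDist x y ≠ 2 ^ k / 2) :
    C.card ≤ 4 * ∑ i ∈ Finset.range (2 ^ (k - 2)), Nat.choose (2 ^ k - 1) i := by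
  have hpow : 2 ^ k = 4 * 2 ^ (k - 2) := by
    obtain ⟨m, rfl⟩ := Nat.exists_eq_add_of_le hk
    simp [pow_add]
  let i₀ : Fin (2 ^ k) := ⟨0, by positivity⟩
  have h := card_le_mul_card_image_of_maps_to
    (f := fun x : Fin (2 ^ k) → Bool => (x i₀, (#{i | x i} : ZMod 2)))
    (s := C) (t := univ) (fun _ _ => mem_univ _)
    (∑ i ∈ Finset.range (2 ^ (k - 2)), Nat.choose (2 ^ k - 1) i) ?_
  · have hcard : #(univ : Finset (Bool × ZMod 2)) = 4 := by simp [ZMod.card]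
    rwa [hcard, mul_comm] at h
  rintro ⟨b, c⟩ -
  have key := card_le_of_even_hammingDist (m := k - 2) (by simpa using hpow) i₀
    {x ∈ C | (x i₀, (#{i | x i} : ZMod 2)) = (b, c)} ?_ ?_ ?_
  · simpa using key
  all_goals
    intro x hx y hy
    simp only [mem_filter, Prod.mk.injEq] at hx hy
  · rw [hx.2.1, hy.2.1]
  · rw [← ZMod.natCast_eq_zero_iff_even, hammingDist_cast_zmod_two, hx.2.2, hy.2.2]
    exact CharTwo.add_self_eq_zero c
  · intro hxy
    have := hC x hx.1 y hy.1 hxy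
    omega
end

section
/- Let k ≥ 3, set r = 2^{k-2} - 1, and for an integer s define the integer φ(s) = (1/r!) · (s-1)(s-2)···(s-r) (the generalized binomial coefficient 'binom(s-1, r)', which is an integer for every integer s). Then for every integer s with 0 ≤ s ≤ 2^{k-1} - 1, φ(s) is odd if and only if s = 0 or s = 2^{k-2}. -/
theorem Nat.odd_choose_two_pow_sub_one_iff (m n : ℕ) :
    Odd (n.choose (2 ^ m - 1)) ↔ 2 ^ m ∣ n + 1 := by
  induction m generalizing n with
  | zero => simp
  | succ m ih =>
    have hpos : 0 < 2 ^ m := by positivity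
    have hmod : (2 ^ (m + 1) - 1) % 2 = 1 := by rw [pow_succ]; omega
    have hdiv : (2 ^ (m + 1) - 1) / 2 = 2 ^ m - 1 := by rw [pow_succ]; omega
    have lucas : n.choose (2 ^ (m + 1) - 1) ≡ _ [MOD 2] :=
      Choose.choose_modEq_choose_mod_mul_choose_div_nat
    rw [hmod, hdiv, Nat.choose_one_right] at lucas
    rw [Nat.odd_iff, lucas, ← Nat.odd_iff, Nat.odd_mul, ih]
    rcases Nat.even_or_odd' n with ⟨c, rfl | rfl⟩
    · have hndvd : ¬ 2 ^ (m + 1) ∣ 2 * c + 1 := fun h => by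
        have := (dvd_pow_self 2 m.succ_ne_zero).trans h
        omega
      simp [hndvd]
    · have hc : (2 * c + 1) / 2 = c := by omega
      rw [hc, show 2 * c + 1 + 1 = (c + 1) * 2 by ring, pow_succ,
        Nat.mul_dvd_mul_iff_right two_pos]
      simp [Nat.add_mod]

theorem Ring.choose_neg_one (r : ℕ) : Ring.choose (-1 : ℤ) r = (-1) ^ r := by
  simp [Ring.choose_neg', Ring.multichoose_one, Int.negOnePow_def, Units.smul_def]

theorem intBinomial_odd_iff (k : ℕ) (hk : 3 ≤ k) (s : ℤ)
    (hs0 : 0 ≤ s) (hs1 : s ≤ 2 ^ (k - 1) - 1) :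
    Odd (Ring.choose (s - 1) (2 ^ (k - 2) - 1)) ↔ s = 0 ∨ s = 2 ^ (k - 2) := by
  obtain ⟨m, rfl⟩ : ∃ m, k = m + 2 := ⟨k - 2, by omega⟩
  simp only [Nat.add_sub_cancel, show m + 2 - 1 = m + 1 by omega] at hs1 ⊢
  lift s to ℕ using hs0
  cases s with
  | zero => simp [Ring.choose_neg_one, Odd.pow]
  | succ n =>
    have hlt : n + 1 < 2 ^ m * 2 := by
      rw [← pow_succ]
      zify
      push_cast at hs1
      linarith
    rw [Nat.cast_succ, add_sub_cancel_right, Ring.choose_natCast, Int.odd_coe_nat,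
      Nat.odd_choose_two_pow_sub_one_iff]
    constructor
    · rintro ⟨c, hc⟩
      have hc2 : c < 2 := lt_of_mul_lt_mul_left (hc ▸ hlt) (Nat.zero_le _)
      right
      interval_cases c
      · omega
      · exact_mod_cast hc.trans (mul_one _)
    · rintro (h | h)
      · omega
      · exact dvd_of_eq (by exact_mod_cast h.symm)
end

section
/- Fix n ≥ 1 and for 0 ≤ j ≤ n let A_j be the 0-1 matrix indexed by (ZMod 2)^n with (A_j)_{x,y} = 1 if and only if the Hamming distance of x and y is j. Let f : {0, 1, …, n} → ℝ and let X = Σ_{j=0}^{n} f(j) A_j. Then the rank of X equals the number of z ∈ (ZMod 2)^n such that Σ_{j=0}^{n} f(j) K_j(w_z) ≠ 0, where w_z is the Hamming weight of z and K_j(i) = Σ_{h=0}^{j} (-1)^h C(i, h) C(n-i, j-h). -/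
open Finset Matrix

/-- The Krawtchouk polynomial value `K_j(i; n)`. -/
noncomputable def krawtchouk (n j i : ℕ) : ℝ :=
  ∑ h ∈ Finset.range (j + 1),
    (-1 : ℝ) ^ h * (Nat.choose i h) * (Nat.choose (n - i) (j - h))

/-- The distance-`j` adjacency matrix of the hypercube `(ZMod 2)^n`. -/
def hypercubeAdj (n j : ℕ) : Matrix (Fin n → ZMod 2) (Fin n → ZMod 2) ℝ :=
  fun x y => if hammingDist x y = j then 1 else 0

/-- The real character pairing on `ZMod 2`: `-1` at `(1, 1)` and `1` elsewhere. -/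
noncomputable def signPairing (a b : ZMod 2) : ℝ := if a = 1 ∧ b = 1 then -1 else 1

/-- The character table of `(ZMod 2)^n`, i.e. the Sylvester–Hadamard matrix of order `2 ^ n`. -/
noncomputable def sylvesterHadamard (n : ℕ) : Matrix (Fin n → ZMod 2) (Fin n → ZMod 2) ℝ :=
  fun x z => ∏ i, signPairing (x i) (z i)

theorem zmod_two_eq_zero_or_one (a : ZMod 2) : a = 0 ∨ a = 1 := by
  revert a
  decide

theorem signPairing_add_left (a b c : ZMod 2) :
    signPairing (a + b) c = signPairing a c * signPairing b c := by
  rcases zmod_two_eq_zero_or_one a with rfl | rfl <;>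
    rcases zmod_two_eq_zero_or_one b with rfl | rfl <;>
    rcases zmod_two_eq_zero_or_one c with rfl | rfl <;> simp [signPairing]

theorem sum_signPairing_mul (a c : ZMod 2) :
    ∑ b, signPairing a b * signPairing b c = if a = c then 2 else 0 := by
  have h : (univ : Finset (ZMod 2)) = {0, 1} := rfl
  rw [h, sum_pair zero_ne_one]
  rcases zmod_two_eq_zero_or_one a with rfl | rfl <;>
    rcases zmod_two_eq_zero_or_one c with rfl | rfl <;>
    norm_num [signPairing]

theorem sylvesterHadamard_mul_self (n : ℕ) :
    sylvesterHadamard n * sylvesterHadamard n = (2 ^ n : ℝ) • 1 := by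
  ext x z
  have h : (sylvesterHadamard n * sylvesterHadamard n) x z
      = ∏ i, ∑ b, signPairing (x i) b * signPairing b (z i) := by
    rw [prod_univ_sum, Fintype.piFinset_univ]
    simp only [mul_apply, sylvesterHadamard, prod_mul_distrib]
  rw [h]
  simp only [sum_signPairing_mul, Matrix.smul_apply, one_apply, smul_eq_mul]
  split_ifs with hxz
  · simp [hxz]
  · obtain ⟨i, hi⟩ := Function.ne_iff.mp hxz
    rw [mul_zero]
    exact prod_eq_zero (mem_univ i) (if_neg hi)

theorem isUnit_det_sylvesterHadamard (n : ℕ) : IsUnit (sylvesterHadamard n).det := by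
  rw [← isUnit_iff_isUnit_det]
  refine IsUnit.of_mul_eq_one ((2 ^ n : ℝ)⁻¹ • sylvesterHadamard n) ?_
  rw [mul_smul_comm, sylvesterHadamard_mul_self, smul_smul, inv_mul_cancel₀ (by positivity),
    one_smul]

open Polynomial in
/-- The generating polynomial, by Hamming weight, of a character of `(ZMod 2)^n`. -/
theorem sum_X_pow_hammingNorm_mul_sylvesterHadamard (n : ℕ) (z : Fin n → ZMod 2) :
    ∑ u, (X : ℝ[X]) ^ hammingNorm u * C (sylvesterHadamard n u z)
      = (1 - X) ^ hammingNorm z * (1 + X) ^ (n - hammingNorm z) := by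
  have hfactor (i : Fin n) : ∑ a, (if a ≠ 0 then (X : ℝ[X]) else 1) * C (signPairing a (z i))
      = if z i ≠ 0 then 1 - X else 1 + X := by
    have h : (univ : Finset (ZMod 2)) = {0, 1} := rfl
    rw [h, sum_pair zero_ne_one]
    rcases zmod_two_eq_zero_or_one (z i) with hz | hz <;>
      simp [hz, signPairing, sub_eq_add_neg]
  have hprod : ∏ i, ∑ a, (if a ≠ 0 then (X : ℝ[X]) else 1) * C (signPairing a (z i))
      = ∑ u, (X : ℝ[X]) ^ hammingNorm u * C (sylvesterHadamard n u z) := by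
    rw [prod_univ_sum, Fintype.piFinset_univ]
    refine sum_congr rfl fun u _ => ?_
    rw [prod_mul_distrib, prod_ite, prod_const, prod_const_one, mul_one, sylvesterHadamard,
      map_prod, hammingNorm]
  rw [← hprod, prod_congr rfl fun i _ => hfactor i, prod_ite, prod_const, prod_const]
  have hcard := card_filter_add_card_filter_not (s := univ) (fun i => z i ≠ 0)
  rw [card_univ, Fintype.card_fin] at hcard
  rw [hammingNorm]
  congr 2
  omega

open Polynomial in
theorem coeff_one_sub_X_pow_real (m h : ℕ) :
    ((1 - X : ℝ[X]) ^ m).coeff h = (-1) ^ h * m.choose h := by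
  have : (1 - X : ℝ[X]) ^ m = ((1 + X) ^ m).comp (C (-1) * X) := by simp [sub_eq_add_neg]
  rw [this, comp_C_mul_X_coeff, coeff_one_add_X_pow, mul_comm]

open Polynomial in
theorem sum_sylvesterHadamard_hammingNorm_eq (n j : ℕ) (z : Fin n → ZMod 2) :
    ∑ u, (if hammingNorm u = j then sylvesterHadamard n u z else 0)
      = krawtchouk n j (hammingNorm z) := by
  have h := congrArg (fun p : ℝ[X] => p.coeff j)
    (sum_X_pow_hammingNorm_mul_sylvesterHadamard n z)
  simp only [finsetSum_coeff, coeff_mul_C, coeff_X_pow] at h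
  simp only [coeff_mul, coeff_one_sub_X_pow_real, coeff_one_add_X_pow,
    Nat.sum_antidiagonal_eq_sum_range_succ_mk] at h
  rw [krawtchouk, ← h]
  refine sum_congr rfl fun u _ => ?_
  simp [eq_comm]

theorem hypercubeAdj_mul_sylvesterHadamard (n j : ℕ) :
    hypercubeAdj n j * sylvesterHadamard n
      = sylvesterHadamard n * diagonal fun z => krawtchouk n j (hammingNorm z) := by
  ext x z
  rw [mul_diagonal, ← sum_sylvesterHadamard_hammingNorm_eq, mul_apply, mul_sum,
    ← Equiv.sum_comp (Equiv.addLeft x)]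
  refine sum_congr rfl fun u _ => ?_
  simp [hypercubeAdj, hammingDist_eq_hammingNorm, sylvesterHadamard, signPairing_add_left,
    prod_mul_distrib]

theorem rank_of_bose_mesner_combination (n : ℕ) (hn : 1 ≤ n) (f : ℕ → ℝ) :
    (∑ j ∈ Finset.range (n + 1), f j • hypercubeAdj n j).rank =
      (Finset.univ.filter fun z : Fin n → ZMod 2 =>
        (∑ j ∈ Finset.range (n + 1), f j * krawtchouk n j (hammingNorm z)) ≠ 0).card := by
  have hdiag : (∑ j ∈ range (n + 1), f j • hypercubeAdj n j) * sylvesterHadamard n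
      = sylvesterHadamard n *
        diagonal fun z => ∑ j ∈ range (n + 1), f j * krawtchouk n j (hammingNorm z) := by
    simp only [sum_mul, smul_mul_assoc, hypercubeAdj_mul_sylvesterHadamard]
    ext x z
    simp only [Matrix.sum_apply, Matrix.smul_apply, mul_diagonal, smul_eq_mul, mul_sum]
    exact sum_congr rfl fun j _ => by ring
  have hH := isUnit_det_sylvesterHadamard n
  rw [← rank_mul_eq_left_of_isUnit_det _ _ hH, hdiag, rank_mul_eq_right_of_isUnit_det _ _ hH,
    rank_diagonal, Fintype.card_subtype]
end
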